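/- Let τ ∈ (0,1) and let f : ℝ/ℤ → [0,1] be a Borel function with τ ≤ f ≤ 1−τ almost everywhere. Then for all integers N, ℓ ≥ 1 and all ε, ε' ∈ {0,1}^N, the matrices T_N(f) + D_N(ε−1) and T_N(f) + D_N(ε'−1) are invertible, and the matrix H^f_{N,ℓ}(ε,ε') := [T_N(f)+D_N(ε'−1)]^{−1} · Λ_{N,ℓ}(f)* · [T_N(f)+D_N(ε−1)]^{−1} · Λ_{N,ℓ}(f) satisfies ‖H^f_{N,ℓ}(ε,ε')‖₁ ≤ (1/τ²)·‖Λ_{N,ℓ}(f)‖_HS². -/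

import Mathlib

open MeasureTheory Matrix
open scoped ComplexOrder

/-- The `n`-th Fourier coefficient of a function on the circle `ℝ/ℤ`. -/
noncomputable def fhat (f : AddCircle (1:ℝ) → ℝ) (n : ℤ) : ℂ :=
  fourierCoeff (fun t => (f t : ℂ)) n

/-- A boolean seen as the complex number `0` or `1`. -/
def bc (b : Bool) : ℂ := if b then 1 else 0

/-- The `N×N` Toeplitz matrix `T_N(f) = (f̂(i-j))_{1 ≤ i,j ≤ N}`. -/
noncomputable def Tmat (f : AddCircle (1:ℝ) → ℝ) (N : ℕ) : Matrix (Fin N) (Fin N) ℂ :=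
  Matrix.of fun i j => fhat f (((i : ℕ) : ℤ) - ((j : ℕ) : ℤ))

/-- The `N×N` matrix `Λ_{N,ℓ}(f) = (f̂(i-(j+N+ℓ)))_{1 ≤ i,j ≤ N}`. -/
noncomputable def Lmat (f : AddCircle (1:ℝ) → ℝ) (N ℓ : ℕ) : Matrix (Fin N) (Fin N) ℂ :=
  Matrix.of fun i j => fhat f (((i : ℕ) : ℤ) - (((j : ℕ) : ℤ) + (N : ℤ) + (ℓ : ℤ)))

open scoped MatrixOrder in
/-- The trace norm `‖M‖₁` of a complex square matrix: the trace of the positive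
semidefinite square root of `Mᴴ M`. -/
noncomputable def traceNorm {N : ℕ} (M : Matrix (Fin N) (Fin N) ℂ) : ℝ :=
  ((CFC.sqrt (Mᴴ * M)).trace).re

/-- The squared Hilbert–Schmidt (Frobenius) norm `‖M‖_HS² = Σ_{i,j} |M_{ij}|²`. -/
noncomputable def frobSq {N : ℕ} (M : Matrix (Fin N) (Fin N) ℂ) : ℝ :=
  ∑ i, ∑ j, ‖M i j‖ ^ 2

/-!
Compression of the order to trigonometric polynomials turns `τ ≤ f ≤ 1 - τ` into
`τ ≤ T ≤ 1 - τ` for the Toeplitz matrix `T = T_N(f)`. Let `p = D_N(ε)`, a projection, and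
`A = T + p - 1`. Then `A` is `T ≥ τ` on the range of `p` and `-(1 - T) ≤ -τ` on its complement, so
against the reflection `u = p - (1 - p)` the off-diagonal blocks cancel and
`u A + A u = 2 (p T p + (1 - p) (1 - T) (1 - p)) ≥ 2 τ`. Expanding `(A - τ u)² ≥ 0` gives
`A² ≥ τ²`, that is `‖A⁻¹‖ ≤ 1 / τ`. The trace norm bound is then Hölder's inequality
`‖X Y‖₁ ≤ ‖X‖_HS ‖Y‖_HS` with `X = A'⁻¹ Λᴴ` and `Y = A⁻¹ Λ`, itself the Cauchy–Schwarz inequality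
for `tr (V X Y)`, where `V` is a contraction with `V (X Y) = |X Y|`.
-/

section StarOrderedRing

variable {R : Type*} [Ring R] [StarRing R] [PartialOrder R] [StarOrderedRing R]
  [Algebra ℝ R]

lemma smul_one_le_conjugate_add_conjugate {p : R} (hp : IsStarProjection p) {τ : ℝ} {a b : R}
    (ha : τ • 1 ≤ a) (hb : τ • 1 ≤ b) : τ • 1 ≤ p * a * p + (1 - p) * b * (1 - p) := by
  have hpa := hp.isSelfAdjoint.conjugate_le_conjugate ha
  have hpb := hp.one_sub.isSelfAdjoint.conjugate_le_conjugate hb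
  simp only [mul_smul_comm, smul_mul_assoc, mul_one, hp.isIdempotentElem.eq,
    hp.one_sub.isIdempotentElem.eq] at hpa hpb
  calc τ • (1 : R) = τ • p + τ • (1 - p) := by module
    _ ≤ _ := add_le_add hpa hpb

variable [StarModule ℝ R]

lemma sq_smul_one_le_star_mul_self {τ : ℝ} (hτ : 0 ≤ τ) {u b : R} (hu : star u * u = 1)
    (hub : (2 * τ) • (1 : R) ≤ star b * u + star u * b) : τ ^ 2 • (1 : R) ≤ star b * b := by
  have hsq : star (b - τ • u) * (b - τ • u) =
      star b * b - τ • (star b * u + star u * b) + τ ^ 2 • 1 := by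
    simp only [star_sub, star_smul, star_trivial, mul_sub, sub_mul, smul_mul_assoc,
      mul_smul_comm, hu]
    module
  have hmul : τ • (2 * τ) • (1 : R) ≤ τ • (star b * u + star u * b) :=
    smul_le_smul_of_nonneg_left hub hτ
  rw [← sub_nonneg]
  calc (0 : R)
      ≤ star (b - τ • u) * (b - τ • u) +
          (τ • (star b * u + star u * b) - τ • (2 * τ) • (1 : R)) :=
        add_nonneg (star_mul_self_nonneg _) (sub_nonneg.2 hmul)
    _ = star b * b - τ ^ 2 • 1 := by rw [hsq]; module

lemma sq_smul_one_le_star_mul_self_add_projection {p : R} (hp : IsStarProjection p)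
    {τ : ℝ} (hτ : 0 ≤ τ) {a : R} (ha : τ • 1 ≤ a) (ha' : a ≤ (1 - τ) • 1) :
    τ ^ 2 • 1 ≤ star (a + (p - 1)) * (a + (p - 1)) := by
  have hpp : p * p = p := hp.isIdempotentElem
  have hps : star p = p := hp.isSelfAdjoint
  have has : star a = a := IsSelfAdjoint.of_ge ha (.smul (.all τ) (.one R))
  have hone_sub : τ • (1 : R) ≤ 1 - a := le_sub_comm.1 <| ha'.trans_eq (by module)
  have hreflection : star (p - (1 - p)) = p - (1 - p) := by simp only [star_sub, star_one, hps]
  refine sq_smul_one_le_star_mul_self hτ (u := p - (1 - p)) ?_ ?_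
  · rw [hreflection]
    noncomm_ring [hpp]
  · calc (2 * τ) • (1 : R) = (2 : ℝ) • τ • 1 := mul_smul _ _ _
      _ ≤ (2 : ℝ) • (p * a * p + (1 - p) * (1 - a) * (1 - p)) :=
        smul_le_smul_of_nonneg_left (smul_one_le_conjugate_add_conjugate hp ha hone_sub) zero_le_two
      _ = star (a + (p - 1)) * (p - (1 - p)) + star (p - (1 - p)) * (a + (p - 1)) := by
        rw [hreflection, star_add, star_sub, star_one, has, hps, two_smul]
        noncomm_ring [hpp]

end StarOrderedRing

section Frobenius

open scoped MatrixOrder Matrix.Norms.Frobenius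

variable {𝕜 k l m n : Type*} [RCLike 𝕜] [Fintype k] [Fintype l] [Fintype m] [Fintype n]

lemma frobenius_norm_sq_eq_sum (A : Matrix m n 𝕜) : ‖A‖ ^ 2 = ∑ i, ∑ j, ‖A i j‖ ^ 2 := by
  rw [frobenius_norm_def, ← Real.sqrt_eq_rpow, Real.sq_sqrt (by positivity)]
  simp only [Real.rpow_two]

lemma frobenius_norm_sq_eq_re_trace (A : Matrix m n 𝕜) :
    ‖A‖ ^ 2 = RCLike.re (Aᴴ * A).trace := by
  rw [frobenius_norm_sq_eq_sum, Finset.sum_comm]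
  simp only [trace, diag_apply, mul_apply, conjTranspose_apply, RCLike.star_def, RCLike.conj_mul,
    map_sum, ← RCLike.ofReal_pow, RCLike.ofReal_re]

lemma norm_trace_mul_le (A : Matrix m n 𝕜) (B : Matrix n m 𝕜) : ‖(A * B).trace‖ ≤ ‖A‖ * ‖B‖ := by
  have htrace : ‖(A * B).trace‖ ≤ ∑ p : m × n, ‖A p.1 p.2‖ * ‖B p.2 p.1‖ := by
    simp only [trace, diag_apply, mul_apply, ← Fintype.sum_prod_type', ← norm_mul]
    exact norm_sum_le _ _
  refine le_of_sq_le_sq ?_ (by positivity)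
  calc ‖(A * B).trace‖ ^ 2 ≤ (∑ p : m × n, ‖A p.1 p.2‖ * ‖B p.2 p.1‖) ^ 2 := by gcongr
    _ ≤ (∑ p : m × n, ‖A p.1 p.2‖ ^ 2) * ∑ p : m × n, ‖B p.2 p.1‖ ^ 2 :=
      Finset.sum_mul_sq_le_sq_mul_sq _ _ _
    _ = (‖A‖ * ‖B‖) ^ 2 := by
      rw [mul_pow, frobenius_norm_sq_eq_sum, frobenius_norm_sq_eq_sum, Fintype.sum_prod_type,
        Fintype.sum_prod_type_right]

lemma frobenius_norm_mul_le_of_conjTranspose_mul_self_le {A : Matrix k m 𝕜} {B : Matrix l m 𝕜}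
    (h : Aᴴ * A ≤ Bᴴ * B) (X : Matrix m n 𝕜) : ‖A * X‖ ≤ ‖B * X‖ := by
  refine le_of_sq_le_sq ?_ (norm_nonneg _)
  have htrace := (le_iff.1 h).conjTranspose_mul_mul_same X |>.trace_nonneg
  rw [Matrix.mul_sub, Matrix.sub_mul, trace_sub, sub_nonneg] at htrace
  simpa only [frobenius_norm_sq_eq_re_trace, conjTranspose_mul, Matrix.mul_assoc] using
    (RCLike.le_iff_re_im.1 htrace).1

lemma exists_pseudoinverse_of_isSelfAdjoint {S : Matrix m m 𝕜} (hS : IsSelfAdjoint S) :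
    ∃ R : Matrix m m 𝕜, IsSelfAdjoint R ∧ R * (S * S) = S ∧ S * (R * R) = R := by
  classical
  have hcont (f : ℝ → ℝ) : ContinuousOn f (spectrum ℝ S) := S.finite_real_spectrum.continuousOn f
  have hmul (f g : ℝ → ℝ) : cfc f S * cfc g S = cfc (fun x ↦ f x * g x) S :=
    (cfc_mul f g S (hcont f) (hcont g)).symm
  have hid : cfc (fun x : ℝ ↦ x) S = S := cfc_id' ℝ S
  have hinv (x : ℝ) : x⁻¹ * (x * x) = x := by rw [← mul_assoc, inv_mul_mul_self]
  have hinv' (x : ℝ) : x * (x⁻¹ * x⁻¹) = x⁻¹ := by simpa only [inv_inv] using hinv x⁻¹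
  refine ⟨cfc (fun x : ℝ ↦ x⁻¹) S, cfc_predicate _ S, ?_, ?_⟩
  · calc cfc (fun x : ℝ ↦ x⁻¹) S * (S * S)
        = cfc (fun x : ℝ ↦ x⁻¹) S * (cfc (fun x : ℝ ↦ x) S * cfc (fun x : ℝ ↦ x) S) := by rw [hid]
      _ = S := by simp_rw [hmul, hinv, hid]
  · calc S * (cfc (fun x : ℝ ↦ x⁻¹) S * cfc (fun x : ℝ ↦ x⁻¹) S)
        = cfc (fun x : ℝ ↦ x) S * (cfc (fun x : ℝ ↦ x⁻¹) S * cfc (fun x : ℝ ↦ x⁻¹) S) := by rw [hid]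
      _ = cfc (fun x : ℝ ↦ x⁻¹) S := by simp_rw [hmul, hinv']

variable [DecidableEq m]

lemma isUnit_det_of_smul_one_le {A : Matrix m m 𝕜} {c : ℝ} (hc : 0 < c)
    (h : c • 1 ≤ Aᴴ * A) : IsUnit A.det := by
  have hpos : (Aᴴ * A).PosDef := by
    simpa using (PosDef.one.smul hc).add_posSemidef (le_iff.1 h)
  exact isUnit_iff_ne_zero.2 (right_ne_zero_of_mul (det_mul Aᴴ A ▸ hpos.det_pos.ne'))

lemma frobenius_norm_inv_mul_le {A : Matrix m m 𝕜} {c : ℝ} (hc : 0 < c)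
    (h : c ^ 2 • 1 ≤ Aᴴ * A) (X : Matrix m n 𝕜) : ‖A⁻¹ * X‖ ≤ c⁻¹ * ‖X‖ := by
  have hA : IsUnit A.det := isUnit_det_of_smul_one_le (by positivity) h
  have hle : ‖(c • 1 : Matrix m m 𝕜) * (A⁻¹ * X)‖ ≤ ‖A * (A⁻¹ * X)‖ :=
    frobenius_norm_mul_le_of_conjTranspose_mul_self_le (by
      simpa only [conjTranspose_smul, star_trivial, conjTranspose_one, smul_mul, Matrix.one_mul,
        smul_smul, ← sq c] using h) _
  rw [mul_nonsing_inv_cancel_left A X hA, smul_mul, Matrix.one_mul, norm_smul,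
    Real.norm_of_nonneg hc.le] at hle
  rwa [le_inv_mul_iff₀ hc]

lemma exists_contraction_mul_eq_abs (M : Matrix m m 𝕜) :
    ∃ V : Matrix m m 𝕜, Vᴴ * V ≤ 1 ∧ V * M = CFC.abs M := by
  obtain ⟨R, hR, hRSS, hSRR⟩ :=
    exists_pseudoinverse_of_isSelfAdjoint (IsSelfAdjoint.of_nonneg (CFC.abs_nonneg M))
  have hMM : Mᴴ * M = CFC.abs M * CFC.abs M := (CFC.abs_mul_abs M).symm
  have hRH : Rᴴ = R := hR
  refine ⟨R * Mᴴ, ?_, by rw [Matrix.mul_assoc, hMM, hRSS]⟩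
  have hproj : IsStarProjection ((R * Mᴴ)ᴴ * (R * Mᴴ)) := by
    refine ⟨?_, .star_mul_self _⟩
    calc (R * Mᴴ)ᴴ * (R * Mᴴ) * ((R * Mᴴ)ᴴ * (R * Mᴴ))
        = M * R * (R * (Mᴴ * M) * (R * R)) * Mᴴ := by
          simp only [conjTranspose_mul, conjTranspose_conjTranspose, hRH, Matrix.mul_assoc]
      _ = M * R * R * Mᴴ := by rw [hMM, hRSS, hSRR]
      _ = (R * Mᴴ)ᴴ * (R * Mᴴ) := by
          simp only [conjTranspose_mul, conjTranspose_conjTranspose, hRH, Matrix.mul_assoc]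
  exact hproj.le_one

end Frobenius

section Toeplitz

open AddCircle
open scoped MatrixOrder

lemma volume_eq_haarAddCircle : (volume : Measure (AddCircle (1 : ℝ))) = haarAddCircle := by
  rw [volume_eq_smul_haarAddCircle, ENNReal.ofReal_one, one_smul]

variable {f g : AddCircle (1 : ℝ) → ℝ}

lemma fhat_eq_integral (f : AddCircle (1 : ℝ) → ℝ) (n : ℤ) :
    fhat f n = ∫ t, fourier (-n) t * (f t : ℂ) := by
  simp only [fhat, fourierCoeff, smul_eq_mul, volume_eq_haarAddCircle]

lemma integrable_fourier_mul_ofReal (hf : Integrable f) (n : ℤ) :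
    Integrable fun t ↦ fourier n t * (f t : ℂ) := by
  rw [volume_eq_haarAddCircle] at hf ⊢
  exact hf.ofReal.fourier_smul n

lemma fhat_sub (hf : Integrable f) (hg : Integrable g) (n : ℤ) :
    fhat (f - g) n = fhat f n - fhat g n := by
  simp only [fhat_eq_integral, Pi.sub_apply, Complex.ofReal_sub, mul_sub]
  exact integral_sub (integrable_fourier_mul_ofReal hf _) (integrable_fourier_mul_ofReal hg _)

lemma fhat_const (c : ℝ) (n : ℤ) : fhat (fun _ ↦ c) n = if n = 0 then (c : ℂ) else 0 := by
  have hconst : (fun _ : AddCircle (1 : ℝ) ↦ (c : ℂ)) = fun t ↦ c * fourier 0 t := by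
    simp only [fourier_zero, mul_one]
  rw [fhat, hconst, fourierCoeff.const_mul, fourierCoeff_fourier, Pi.single_apply, mul_ite,
    mul_one, mul_zero]

lemma star_fhat (f : AddCircle (1 : ℝ) → ℝ) (n : ℤ) : star (fhat f n) = fhat f (-n) := by
  simp only [fhat_eq_integral, ← starRingEnd_apply, ← integral_conj, map_mul, Complex.conj_ofReal,
    ← fourier_neg]

lemma Tmat_isHermitian (f : AddCircle (1 : ℝ) → ℝ) (N : ℕ) : (Tmat f N).IsHermitian := by
  ext i j
  simp only [Tmat, conjTranspose_apply, of_apply, star_fhat, neg_sub]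

lemma Tmat_sub (hf : Integrable f) (hg : Integrable g) (N : ℕ) :
    Tmat (f - g) N = Tmat f N - Tmat g N := by
  ext i j
  exact fhat_sub hf hg _

lemma Tmat_const (c : ℝ) (N : ℕ) : Tmat (fun _ ↦ c) N = c • 1 := by
  ext i j
  simp [Tmat, fhat_const, sub_eq_zero, one_apply, Fin.ext_iff]

lemma star_dotProduct_Tmat_mulVec (hf : Integrable f) {N : ℕ} (x : Fin N → ℂ) :
    star x ⬝ᵥ Tmat f N *ᵥ x =
      ((∫ t, f t * ‖∑ j : Fin N, x j * fourier (j : ℤ) t‖ ^ 2 : ℝ) : ℂ) := by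
  have hint (i j : Fin N) :
      Integrable fun t ↦ star (x i) * x j * (fourier (-((i : ℤ) - j)) t * (f t : ℂ)) :=
    (integrable_fourier_mul_ofReal hf _).const_mul _
  have hexpand (t : AddCircle (1 : ℝ)) :
      ((f t * ‖∑ j : Fin N, x j * fourier (j : ℤ) t‖ ^ 2 : ℝ) : ℂ) =
        ∑ i : Fin N, ∑ j : Fin N, star (x i) * x j * (fourier (-((i : ℤ) - j)) t * (f t : ℂ)) := by
    push_cast
    simp_rw [← Complex.conj_mul', map_sum, Finset.sum_mul_sum, Finset.mul_sum, neg_sub,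
      sub_eq_add_neg, fourier_add, fourier_neg, map_mul, ← starRingEnd_apply]
    refine Finset.sum_congr rfl fun i _ ↦ Finset.sum_congr rfl fun j _ ↦ ?_
    ring
  rw [← integral_complex_ofReal]
  simp_rw [hexpand]
  rw [integral_finsetSum _ fun i _ ↦ integrable_finsetSum _ fun j _ ↦ hint i j]
  simp_rw [integral_finsetSum _ fun j _ ↦ hint _ j, integral_const_mul, ← fhat_eq_integral,
    dotProduct, mulVec, dotProduct, Finset.mul_sum, Tmat, of_apply, Pi.star_apply]
  refine Finset.sum_congr rfl fun i _ ↦ Finset.sum_congr rfl fun j _ ↦ ?_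
  ring

lemma Tmat_posSemidef (hf : Integrable f) (hf0 : 0 ≤ᵐ[volume] f) (N : ℕ) :
    (Tmat f N).PosSemidef := by
  refine .of_dotProduct_mulVec_nonneg (Tmat_isHermitian f N) fun x ↦ ?_
  rw [star_dotProduct_Tmat_mulVec hf, Complex.zero_le_real]
  refine integral_nonneg_of_ae ?_
  filter_upwards [hf0] with t ht
  exact mul_nonneg ht (sq_nonneg _)

lemma Tmat_mono (hf : Integrable f) (hg : Integrable g) (hfg : f ≤ᵐ[volume] g) (N : ℕ) :
    Tmat f N ≤ Tmat g N := by
  rw [le_iff, ← Tmat_sub hg hf]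
  exact Tmat_posSemidef (hg.sub hf) (hfg.mono fun _ ↦ sub_nonneg.2) N

lemma smul_one_le_Tmat {c : ℝ} (hf : Integrable f) (hcf : ∀ᵐ t, c ≤ f t) (N : ℕ) :
    c • 1 ≤ Tmat f N :=
  Tmat_const c N ▸ Tmat_mono (integrable_const c) hf hcf N

lemma Tmat_le_smul_one {c : ℝ} (hf : Integrable f) (hfc : ∀ᵐ t, f t ≤ c) (N : ℕ) :
    Tmat f N ≤ c • 1 :=
  Tmat_const c N ▸ Tmat_mono hf (integrable_const c) hfc N

lemma isStarProjection_diagonal_bc {N : ℕ} (ε : Fin N → Bool) :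
    IsStarProjection (diagonal fun i ↦ bc (ε i)) where
  isIdempotentElem := by
    rw [IsIdempotentElem, diagonal_mul_diagonal]
    congr! 2 with i
    cases ε i <;> simp [bc]
  isSelfAdjoint := by
    rw [IsSelfAdjoint, star_eq_conjTranspose, diagonal_conjTranspose]
    congr! 2 with i
    cases h : ε i <;> simp [bc, h]

lemma sq_smul_one_le_Tmat_add_diagonal {τ : ℝ} (hτ : 0 ≤ τ) (hf : AEMeasurable f)
    (hbd : ∀ᵐ t, τ ≤ f t ∧ f t ≤ 1 - τ) {N : ℕ} (ε : Fin N → Bool) :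
    τ ^ 2 • 1 ≤ (Tmat f N + diagonal fun i ↦ bc (ε i) - 1)ᴴ *
      (Tmat f N + diagonal fun i ↦ bc (ε i) - 1) := by
  have hint : Integrable f := .of_mem_Icc τ (1 - τ) hf hbd
  have hdiag : (diagonal fun i ↦ bc (ε i) - 1) = (diagonal fun i ↦ bc (ε i)) - 1 := by
    rw [← diagonal_one, diagonal_sub]
  rw [hdiag]
  exact sq_smul_one_le_star_mul_self_add_projection (isStarProjection_diagonal_bc ε) hτ
    (smul_one_le_Tmat hint (hbd.mono fun _ h ↦ h.1) N)
    (Tmat_le_smul_one hint (hbd.mono fun _ h ↦ h.2) N)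

end Toeplitz

section TraceNorm

open scoped MatrixOrder Matrix.Norms.Frobenius

variable {m : Type*} [Fintype m] {N : ℕ}

lemma traceNorm_mul_le (X : Matrix (Fin N) m ℂ) (Y : Matrix m (Fin N) ℂ) :
    traceNorm (X * Y) ≤ ‖X‖ * ‖Y‖ := by
  obtain ⟨V, hV, hVXY⟩ := exists_contraction_mul_eq_abs (X * Y)
  calc traceNorm (X * Y) = ((V * X * Y).trace).re := by
        rw [Matrix.mul_assoc, hVXY]; rfl
    _ ≤ ‖(V * X * Y).trace‖ := Complex.re_le_norm _
    _ ≤ ‖V * X‖ * ‖Y‖ := norm_trace_mul_le _ _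
    _ ≤ ‖X‖ * ‖Y‖ := by
        gcongr
        simpa only [Matrix.one_mul] using frobenius_norm_mul_le_of_conjTranspose_mul_self_le
          (B := (1 : Matrix (Fin N) (Fin N) ℂ)) (by rwa [conjTranspose_one, Matrix.one_mul]) X

lemma traceNorm_inv_mul_conjTranspose_mul_inv_mul_le [DecidableEq m] {A : Matrix m m ℂ}
    {B : Matrix (Fin N) (Fin N) ℂ} {a b : ℝ} (ha : 0 < a) (hb : 0 < b)
    (hA : a ^ 2 • 1 ≤ Aᴴ * A) (hB : b ^ 2 • 1 ≤ Bᴴ * B) (L : Matrix m (Fin N) ℂ) :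
    traceNorm (B⁻¹ * Lᴴ * A⁻¹ * L) ≤ (a * b)⁻¹ * ‖L‖ ^ 2 := by
  calc traceNorm (B⁻¹ * Lᴴ * A⁻¹ * L) = traceNorm (B⁻¹ * Lᴴ * (A⁻¹ * L)) := by
        rw [Matrix.mul_assoc (B⁻¹ * Lᴴ)]
    _ ≤ ‖B⁻¹ * Lᴴ‖ * ‖A⁻¹ * L‖ := traceNorm_mul_le _ _
    _ ≤ (b⁻¹ * ‖Lᴴ‖) * (a⁻¹ * ‖L‖) := by
        gcongr
        · exact frobenius_norm_inv_mul_le hb hB Lᴴ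
        · exact frobenius_norm_inv_mul_le ha hA L
    _ = (a * b)⁻¹ * ‖L‖ ^ 2 := by rw [frobenius_norm_conjTranspose, mul_inv]; ring

theorem traceNorm_H_le_general {τ : ℝ} (hτ : 0 < τ) {f : AddCircle (1 : ℝ) → ℝ}
    (hf : AEMeasurable f) (hbd : ∀ᵐ t, τ ≤ f t ∧ f t ≤ 1 - τ) {M N : ℕ}
    (ε : Fin M → Bool) (ε' : Fin N → Bool) (L : Matrix (Fin M) (Fin N) ℂ) :
    IsUnit (Tmat f M + diagonal fun i ↦ bc (ε i) - 1).det ∧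
      IsUnit (Tmat f N + diagonal fun i ↦ bc (ε' i) - 1).det ∧
      traceNorm
          ((Tmat f N + diagonal fun i ↦ bc (ε' i) - 1)⁻¹ * Lᴴ *
            (Tmat f M + diagonal fun i ↦ bc (ε i) - 1)⁻¹ * L) ≤
        (1 / τ ^ 2) * ∑ i, ∑ j, ‖L i j‖ ^ 2 := by
  have hA := sq_smul_one_le_Tmat_add_diagonal hτ.le hf hbd ε
  have hB := sq_smul_one_le_Tmat_add_diagonal hτ.le hf hbd ε'
  refine ⟨isUnit_det_of_smul_one_le (sq_pos_of_pos hτ) hA,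
    isUnit_det_of_smul_one_le (sq_pos_of_pos hτ) hB, ?_⟩
  rw [one_div, sq τ, ← frobenius_norm_sq_eq_sum]
  exact traceNorm_inv_mul_conjTranspose_mul_inv_mul_le hτ hτ hA hB L

end TraceNorm

/-- If `τ ≤ f ≤ 1 - τ` a.e. with `τ ∈ (0,1)`, then `T_N(f) + D_N(ε-1)` and
`T_N(f) + D_N(ε'-1)` are invertible and
`‖H^f_{N,ℓ}(ε,ε')‖₁ ≤ (1/τ²)·‖Λ_{N,ℓ}(f)‖_HS²`. -/
theorem traceNorm_H_le
    (τ : ℝ) (hτ0 : 0 < τ) (hτ1 : τ < 1)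
    (f : AddCircle (1:ℝ) → ℝ) (hmeas : Measurable f)
    (h0 : ∀ t, 0 ≤ f t) (h1 : ∀ t, f t ≤ 1)
    (hbd : ∀ᵐ t : AddCircle (1:ℝ), τ ≤ f t ∧ f t ≤ 1 - τ)
    (N ℓ : ℕ) (hN : 1 ≤ N) (hℓ : 1 ≤ ℓ) (ε ε' : Fin N → Bool) :
    IsUnit (Tmat f N + Matrix.diagonal (fun i => bc (ε i) - 1)).det ∧
      IsUnit (Tmat f N + Matrix.diagonal (fun i => bc (ε' i) - 1)).det ∧
      traceNorm
          ((Tmat f N + Matrix.diagonal (fun i => bc (ε' i) - 1))⁻¹ * (Lmat f N ℓ)ᴴ *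
            (Tmat f N + Matrix.diagonal (fun i => bc (ε i) - 1))⁻¹ * Lmat f N ℓ) ≤
        (1 / τ ^ 2) * frobSq (Lmat f N ℓ) :=
  traceNorm_H_le_general hτ0 hmeas.aemeasurable hbd ε ε' (Lmat f N ℓ)
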